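/- arXiv:1301.3708 — 7 statements merged into one kernel-verified Lean document; each statement's English description precedes it below -/
import Mathlib

section
/- Let N ≥ n ≥ 1 be integers, let A ∈ ℂ^{N×N} be Hermitian positive definite with eigendecomposition A = U_A D_A U_A^H where U_A is unitary and D_A is real diagonal with 0 < (D_A)_{1,1} < … < (D_A)_{N,N} (distinct eigenvalues), and let B ∈ ℂ^{n×n} be Hermitian positive definite with eigendecomposition B = U_B D_B U_B^H where U_B is unitary and D_B is real diagonal with (D_B)_{1,1} > … > (D_B)_{n,n} > 0 (distinct eigenvalues). Then every P ∈ ℂ^{n×N} that satisfies P A^{-1} P^H ⪰ B and attains the minimal energy tr(P P^H) = Σ_{i=1}^n (D_A)_{i,i}(D_B)_{i,i} among all such feasible matrices is necessarily of the form P = U_B D U_A^H, where D ∈ ℂ^{n×N} is rectangular diagonal with |(D)_{i,i}| = √((D_A)_{i,i}(D_B)_{i,i}) for i = 1,…,n. (Theorem 1, uniqueness part.) -/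
open Matrix Finset
open scoped ComplexOrder

/-- Dual potentials certifying strict optimality of the antitone pairing. -/
lemma exists_potential (n : ℕ) (a b : ℕ → ℝ)
    (ha : ∀ i j, i < j → j < n → a i < a j) (hb : ∀ i j, i < j → j < n → b j < b i) :
    ∃ u : ℕ → ℝ, ∀ i k, i < n → k < n → i ≠ k → u i - u k < (a i - a k) * b k := by
  refine ⟨fun i => ∑ l ∈ Finset.range i, (a (l+1) - a l) * ((b l + b (l+1)) / 2), ?_⟩
  set u : ℕ → ℝ := fun i => ∑ l ∈ Finset.range i, (a (l+1) - a l) * ((b l + b (l+1)) / 2) with hu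
  have hs : ∀ i, u (i+1) = u i + (a (i+1) - a i) * ((b i + b (i+1)) / 2) := by
    intro i
    simp only [hu, Finset.sum_range_succ]
  have key : ∀ k i, k + 1 ≤ i → i < n →
      (u i - u k < (a i - a k) * b k ∧ u k - u i < (a k - a i) * b i) := by
    intro k i hki
    induction i, hki using Nat.le_induction with
    | base =>
      intro h
      have h1 := ha k (k+1) (by omega) h
      have h2 := hb k (k+1) (by omega) h
      rw [hs]
      constructor <;> nlinarith [mul_pos (sub_pos.2 h1) (sub_pos.2 h2)]
    | succ i hki ih =>
      intro h
      obtain ⟨i1, i2⟩ := ih (by omega)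
      have h1 := ha i (i+1) (by omega) h
      have h2 := hb i (i+1) (by omega) h
      have h3 := hb k i (by omega) (by omega)
      have h4 := ha k i (by omega) (by omega)
      rw [hs]
      constructor <;> nlinarith [mul_pos (sub_pos.2 h1) (sub_pos.2 h2),
        mul_pos (sub_pos.2 h1) (sub_pos.2 h3), mul_pos (sub_pos.2 h4) (sub_pos.2 h2)]
  intro i k hi hk hik
  rcases lt_or_gt_of_ne hik with h | h
  · exact (key i k h hk).2
  · exact (key k i h hi).1

lemma real_core (N n : ℕ) (hnN : n ≤ N) (a : Fin N → ℝ) (b : Fin n → ℝ)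
    (hapos : ∀ i, 0 < a i) (ha : StrictMono a) (hb : StrictAnti b)
    (r : Fin n → Fin N → ℝ) (hr : ∀ i j, 0 ≤ r i j)
    (hr0 : ∀ (i : Fin n) (j : Fin N), (j : ℕ) < i → r i j = 0)
    (s : Fin n → Fin n → ℝ) (hs : ∀ i k, 0 ≤ s i k)
    (hrow : ∀ i, ∑ k, s i k = 1) (hcol : ∀ k, ∑ i, s i k = 1)
    (hge : ∀ i, ∑ k, s i k * b k ≤ ∑ j, r i j)
    (htot : ∑ i, ∑ j, a j * r i j = ∑ i, a (Fin.castLE hnN i) * b i) :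
    (∀ i k, i ≠ k → s i k = 0) ∧
    (∀ (i : Fin n) (j : Fin N), (i : ℕ) ≠ j → r i j = 0) ∧
    (∀ i, r i (Fin.castLE hnN i) = b i) := by
  set c : Fin n → ℝ := fun i => a (Fin.castLE hnN i) with hc
  obtain ⟨u, hu⟩ : ∃ u : Fin n → ℝ, ∀ i k, i ≠ k → u i - u k < (c i - c k) * b k := by
    obtain ⟨u, hu⟩ := exists_potential n (fun l => if h : l < n then c ⟨l, h⟩ else 0)
      (fun l => if h : l < n then b ⟨l, h⟩ else 0)
      (by
        intro i j hij hj
        have hi : i < n := hij.trans hj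
        simp only [hi, hj, dif_pos]
        exact ha (by simpa [Fin.lt_def] using hij))
      (by
        intro i j hij hj
        have hi : i < n := hij.trans hj
        simp only [hi, hj, dif_pos]
        exact hb (by simpa [Fin.lt_def] using hij))
    refine ⟨fun i => u i, fun i k hik => ?_⟩
    have := hu i k i.2 k.2 (fun h => hik (Fin.ext h))
    simpa using this
  have t1 : ∀ i j, 0 ≤ (a j - c i) * r i j := by
    intro i j
    by_cases h : (j : ℕ) < i
    · rw [hr0 i j h, mul_zero]
    · refine mul_nonneg (sub_nonneg.2 (ha.monotone ?_)) (hr i j)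
      simpa [Fin.le_def] using h
  have t2 : ∀ i, 0 ≤ c i * (∑ j, r i j - ∑ k, s i k * b k) := fun i =>
    mul_nonneg (hapos _).le (sub_nonneg.2 (hge i))
  have t3 : ∀ i k, 0 ≤ s i k * ((c i - c k) * b k - (u i - u k)) := by
    intro i k
    by_cases h : i = k
    · subst h; simp
    · exact mul_nonneg (hs i k) (sub_nonneg.2 (hu i k h).le)
  have e3 : ∑ i, ∑ k, s i k * ((c i - c k) * b k - (u i - u k))
      = ∑ i, c i * (∑ k, s i k * b k) - ∑ i, c i * b i := by
    have x1 : ∑ i, ∑ k, s i k * u i = ∑ i, u i := by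
      refine Finset.sum_congr rfl fun i _ => ?_
      rw [← Finset.sum_mul, hrow, one_mul]
    have x2 : ∑ i, ∑ k, s i k * u k = ∑ i, u i := by
      rw [Finset.sum_comm]
      refine Finset.sum_congr rfl fun i _ => ?_
      rw [← Finset.sum_mul, hcol, one_mul]
    have x3 : ∑ i, ∑ k, s i k * (c k * b k) = ∑ i, c i * b i := by
      rw [Finset.sum_comm]
      refine Finset.sum_congr rfl fun i _ => ?_
      rw [← Finset.sum_mul, hcol, one_mul]
    have x4 : ∑ i, ∑ k, s i k * ((c i - c k) * b k - (u i - u k))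
      = ∑ i, c i * (∑ k, s i k * b k) - ∑ i, ∑ k, s i k * (c k * b k)
        - ∑ i, ∑ k, s i k * u i + ∑ i, ∑ k, s i k * u k := by
      simp only [Finset.mul_sum, ← Finset.sum_sub_distrib, ← Finset.sum_add_distrib]
      refine Finset.sum_congr rfl fun i _ => Finset.sum_congr rfl fun k _ => ?_
      ring
    rw [x4, x1, x2, x3]; ring
  have e1 : ∑ i, ∑ j, (a j - c i) * r i j
      = ∑ i, ∑ j, a j * r i j - ∑ i, c i * ∑ j, r i j := by
    simp only [Finset.mul_sum, ← Finset.sum_sub_distrib]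
    refine Finset.sum_congr rfl fun i _ => Finset.sum_congr rfl fun k _ => ?_
    ring
  have e2 : ∑ i, c i * (∑ j, r i j - ∑ k, s i k * b k)
      = ∑ i, c i * ∑ j, r i j - ∑ i, c i * (∑ k, s i k * b k) := by
    rw [← Finset.sum_sub_distrib]
    exact Finset.sum_congr rfl fun i _ => by ring
  have n1 : 0 ≤ ∑ i, ∑ j, (a j - c i) * r i j :=
    Finset.sum_nonneg fun i _ => Finset.sum_nonneg fun j _ => t1 i j
  have n2 : 0 ≤ ∑ i, c i * (∑ j, r i j - ∑ k, s i k * b k) :=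
    Finset.sum_nonneg fun i _ => t2 i
  have n3 : 0 ≤ ∑ i, ∑ k, s i k * ((c i - c k) * b k - (u i - u k)) :=
    Finset.sum_nonneg fun i _ => Finset.sum_nonneg fun j _ => t3 i j
  have z1 : ∑ i, ∑ j, (a j - c i) * r i j = 0 := by linarith
  have z2 : ∑ i, c i * (∑ j, r i j - ∑ k, s i k * b k) = 0 := by linarith
  have z3 : ∑ i, ∑ k, s i k * ((c i - c k) * b k - (u i - u k)) = 0 := by linarith
  have w1 : ∀ i j, (a j - c i) * r i j = 0 := by
    intro i j
    have h := (Finset.sum_eq_zero_iff_of_nonneg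
      (fun i _ => Finset.sum_nonneg fun j _ => t1 i j)).1 z1 i (Finset.mem_univ _)
    exact (Finset.sum_eq_zero_iff_of_nonneg (fun j _ => t1 i j)).1 h j (Finset.mem_univ _)
  have w2 : ∀ i, c i * (∑ j, r i j - ∑ k, s i k * b k) = 0 := fun i =>
    (Finset.sum_eq_zero_iff_of_nonneg (fun i _ => t2 i)).1 z2 i (Finset.mem_univ _)
  have w3 : ∀ i k, s i k * ((c i - c k) * b k - (u i - u k)) = 0 := by
    intro i j
    have h := (Finset.sum_eq_zero_iff_of_nonneg
      (fun i _ => Finset.sum_nonneg fun j _ => t3 i j)).1 z3 i (Finset.mem_univ _)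
    exact (Finset.sum_eq_zero_iff_of_nonneg (fun j _ => t3 i j)).1 h j (Finset.mem_univ _)
  have f1 : ∀ i k, i ≠ k → s i k = 0 := fun i k h =>
    (mul_eq_zero.1 (w3 i k)).resolve_right (sub_pos.2 (hu i k h)).ne'
  have f2 : ∀ (i : Fin n) (j : Fin N), (i : ℕ) ≠ j → r i j = 0 := fun i j h =>
    (mul_eq_zero.1 (w1 i j)).resolve_left (sub_ne_zero.2 fun hh => h (by
      have := congrArg Fin.val (ha.injective hh)
      simpa using this.symm))
  refine ⟨f1, f2, fun i => ?_⟩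
  have g1 : ∑ j, r i j = r i (Fin.castLE hnN i) := by
    refine Finset.sum_eq_single _ (fun j _ hj => f2 i j fun h => hj ?_) (by simp)
    exact Fin.ext (by simpa using h.symm)
  have g2 : s i i = 1 := by
    rw [← hrow i]
    exact (Finset.sum_eq_single _ (fun j _ hj => f1 i j hj.symm) (by simp)).symm
  have g3 : ∑ k, s i k * b k = b i := by
    rw [Finset.sum_eq_single i (fun j _ hj => by rw [f1 i j hj.symm, zero_mul]) (by simp), g2,
      one_mul]
  have := (mul_eq_zero.1 (w2 i)).resolve_left (hapos _).ne'
  rw [g1, g3] at this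
  linarith

/-- A unitary matrix bringing `Q` to upper triangular form. -/
lemma exists_triangular (N n : ℕ) (hnN : n ≤ N) (Q : Matrix (Fin n) (Fin N) ℂ) :
    ∃ W ∈ Matrix.unitaryGroup (Fin n) ℂ,
      ∀ (i : Fin n) (j : Fin N), (j : ℕ) < i → (W * Q) i j = 0 := by
  let f : Fin n → EuclideanSpace ℂ (Fin n) := fun j => WithLp.toLp 2 fun i => Q i (Fin.castLE hnN j)
  have hcard : Module.finrank ℂ (EuclideanSpace ℂ (Fin n)) = Fintype.card (Fin n) := by simp
  let e := InnerProductSpace.gramSchmidtOrthonormalBasis hcard f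
  refine ⟨Matrix.of fun i k => star (e i k), ?_, ?_⟩
  · rw [Matrix.mem_unitaryGroup_iff]
    ext i j
    have h := orthonormal_iff_ite.1 e.orthonormal i j
    simp only [Matrix.mul_apply, Matrix.star_apply, Matrix.of_apply, star_star, Matrix.one_apply]
    rw [← h]
    simp [PiLp.inner_apply, mul_comm]
  · intro i j hji
    have hj : (j : ℕ) < n := hji.trans i.2
    have h := InnerProductSpace.gramSchmidtOrthonormalBasis_inv_triangular hcard f
      (i := (⟨j, hj⟩ : Fin n)) (j := i) (by simpa [Fin.lt_def] using hji)
    rw [Matrix.mul_apply]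
    rw [PiLp.inner_apply] at h
    rw [← h]
    refine Finset.sum_congr rfl fun k _ => ?_
    simp [f, e, mul_comm]

lemma diag_mul_conj (m p : ℕ) (X : Matrix (Fin m) (Fin p) ℂ) (d : Fin p → ℝ) (i : Fin m) :
    (X * Matrix.diagonal (fun j => (d j : ℂ)) * Xᴴ) i i = ((∑ j, ‖X i j‖ ^ 2 * d j : ℝ) : ℂ) := by
  rw [Matrix.mul_apply]
  push_cast
  refine Finset.sum_congr rfl fun j _ => ?_
  rw [Matrix.mul_diagonal, Matrix.conjTranspose_apply, ← Complex.mul_conj']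
  simp only [Complex.star_def]
  ring

/-- Theorem 1 (uniqueness part): when `A` and `B` have distinct eigenvalues, every feasible
`P` (i.e. `P A⁻¹ Pᴴ ⪰ B`) attaining the minimal energy `Σ_i (D_A)_{ii}(D_B)_{ii}` is of the
form `U_B D U_Aᴴ` with `D` rectangular diagonal and `|D_{ii}| = √((D_A)_{ii}(D_B)_{ii})`. -/
theorem stmt1 (N n : ℕ) (hn : 1 ≤ n) (hnN : n ≤ N)
    (A : Matrix (Fin N) (Fin N) ℂ) (hA : A.PosDef)
    (UA : Matrix (Fin N) (Fin N) ℂ) (hUA : UA ∈ Matrix.unitaryGroup (Fin N) ℂ)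
    (DA : Fin N → ℝ) (hDApos : ∀ i, 0 < DA i) (hDAmono : StrictMono DA)
    (hAdec : A = UA * Matrix.diagonal (fun i => (DA i : ℂ)) * UAᴴ)
    (Bm : Matrix (Fin n) (Fin n) ℂ) (hB : Bm.PosDef)
    (UB : Matrix (Fin n) (Fin n) ℂ) (hUB : UB ∈ Matrix.unitaryGroup (Fin n) ℂ)
    (DB : Fin n → ℝ) (hDBpos : ∀ i, 0 < DB i) (hDBanti : StrictAnti DB)
    (hBdec : Bm = UB * Matrix.diagonal (fun i => (DB i : ℂ)) * UBᴴ)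
    (P : Matrix (Fin n) (Fin N) ℂ)
    (hfeas : (P * A⁻¹ * Pᴴ - Bm).PosSemidef)
    (hmin : (P * Pᴴ).trace = ((∑ i : Fin n, DA (Fin.castLE hnN i) * DB i : ℝ) : ℂ)) :
    ∃ D : Matrix (Fin n) (Fin N) ℂ,
      (∀ (i : Fin n) (j : Fin N), (i : ℕ) ≠ (j : ℕ) → D i j = 0) ∧
      (∀ i : Fin n, ‖D i (Fin.castLE hnN i)‖ =
        Real.sqrt (DA (Fin.castLE hnN i) * DB i)) ∧
      P = UB * D * UAᴴ := by
  have hUA1 : UA * UAᴴ = 1 := Matrix.mem_unitaryGroup_iff.1 hUA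
  have hUA2 : UAᴴ * UA = 1 := Matrix.mem_unitaryGroup_iff'.1 hUA
  have hUB1 : UB * UBᴴ = 1 := Matrix.mem_unitaryGroup_iff.1 hUB
  have hUB2 : UBᴴ * UB = 1 := Matrix.mem_unitaryGroup_iff'.1 hUB
  set Q : Matrix (Fin n) (Fin N) ℂ := UBᴴ * P * UA with hQ
  have hP : P = UB * Q * UAᴴ := by
    calc P = (UB * UBᴴ) * P * (UA * UAᴴ) := by rw [hUB1, hUA1]; simp
      _ = _ := by simp only [hQ, Matrix.mul_assoc]
  obtain ⟨W, hW, htri⟩ := exists_triangular N n hnN Q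
  have hW1 : W * Wᴴ = 1 := Matrix.mem_unitaryGroup_iff.1 hW
  have hW2 : Wᴴ * W = 1 := Matrix.mem_unitaryGroup_iff'.1 hW
  have hAinv : A⁻¹ = UA * Matrix.diagonal (fun i => (((DA i)⁻¹ : ℝ) : ℂ)) * UAᴴ := by
    apply Matrix.inv_eq_right_inv
    have hd : Matrix.diagonal (fun i => (DA i : ℂ)) *
        Matrix.diagonal (fun i => (((DA i)⁻¹ : ℝ) : ℂ)) = 1 := by
      rw [Matrix.diagonal_mul_diagonal, ← Matrix.diagonal_one]
      congr 1
      funext i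
      have : (DA i : ℂ) ≠ 0 := by exact_mod_cast (hDApos i).ne'
      push_cast
      exact mul_inv_cancel₀ this
    calc A * (UA * Matrix.diagonal (fun i => (((DA i)⁻¹ : ℝ) : ℂ)) * UAᴴ)
        = UA * (Matrix.diagonal (fun i => (DA i : ℂ)) * ((UAᴴ * UA) *
          Matrix.diagonal (fun i => (((DA i)⁻¹ : ℝ) : ℂ)))) * UAᴴ := by
          rw [hAdec]; simp only [Matrix.mul_assoc]
      _ = 1 := by rw [hUA2, Matrix.one_mul, hd, Matrix.mul_one, hUA1]
  set T : Matrix (Fin n) (Fin N) ℂ := W * Q with hT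
  -- feasibility for `T`
  have hfT : (T * Matrix.diagonal (fun i => (((DA i)⁻¹ : ℝ) : ℂ)) * Tᴴ
      - W * Matrix.diagonal (fun i => (DB i : ℂ)) * Wᴴ).PosSemidef := by
    have h := hfeas.mul_mul_conjTranspose_same (W * UBᴴ)
    have h1 : (W * UBᴴ) * (P * A⁻¹ * Pᴴ) * (W * UBᴴ)ᴴ =
        T * Matrix.diagonal (fun i => (((DA i)⁻¹ : ℝ) : ℂ)) * Tᴴ := by
      rw [hAinv, hT, hQ]
      simp only [Matrix.conjTranspose_mul, Matrix.conjTranspose_conjTranspose, Matrix.mul_assoc]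
    have h2 : (W * UBᴴ) * Bm * (W * UBᴴ)ᴴ =
        W * Matrix.diagonal (fun i => (DB i : ℂ)) * Wᴴ := by
      calc (W * UBᴴ) * Bm * (W * UBᴴ)ᴴ = W * ((UBᴴ * UB) *
            Matrix.diagonal (fun i => (DB i : ℂ)) * (UBᴴ * UB)) * Wᴴ := by
            rw [hBdec]
            simp only [Matrix.conjTranspose_mul, Matrix.conjTranspose_conjTranspose,
              Matrix.mul_assoc]
        _ = _ := by rw [hUB2, Matrix.one_mul, Matrix.mul_one]
    rw [Matrix.mul_sub, Matrix.sub_mul, h1, h2] at h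
    exact h
  have hge : ∀ i, ∑ k, ‖W i k‖ ^ 2 * DB k ≤ ∑ j, ‖T i j‖ ^ 2 * (DA j)⁻¹ := by
    intro i
    have h := hfT.diag_nonneg (i := i)
    rw [Matrix.sub_apply, diag_mul_conj, diag_mul_conj, ← Complex.ofReal_sub] at h
    have h' := Complex.zero_le_real.1 h
    linarith
  -- the energy of `T`
  have htr : ∑ i, ∑ j, ‖T i j‖ ^ 2 = ∑ i : Fin n, DA (Fin.castLE hnN i) * DB i := by
    have h1 : (T * Tᴴ).trace = (P * Pᴴ).trace := by
      have e1 : T * Tᴴ = (W * UBᴴ) * (P * Pᴴ) * (W * UBᴴ)ᴴ := by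
        calc T * Tᴴ = W * UBᴴ * P * (UA * UAᴴ) * Pᴴ * (W * UBᴴ)ᴴ := by
              rw [hT, hQ]
              simp only [Matrix.conjTranspose_mul, Matrix.conjTranspose_conjTranspose,
                Matrix.mul_assoc]
          _ = _ := by rw [hUA1, Matrix.mul_one]; simp only [Matrix.mul_assoc]
      have e2 : (W * UBᴴ)ᴴ * (W * UBᴴ) = 1 := by
        calc (W * UBᴴ)ᴴ * (W * UBᴴ) = UB * (Wᴴ * W) * UBᴴ := by
              simp only [Matrix.conjTranspose_mul, Matrix.conjTranspose_conjTranspose,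
                Matrix.mul_assoc]
          _ = 1 := by rw [hW2, Matrix.mul_one, hUB1]
      rw [e1, Matrix.trace_mul_comm, ← Matrix.mul_assoc, e2, Matrix.one_mul]
    have h2 : (T * Tᴴ).trace = ((∑ i, ∑ j, ‖T i j‖ ^ 2 : ℝ) : ℂ) := by
      rw [Matrix.trace, Complex.ofReal_sum]
      refine Finset.sum_congr rfl fun i _ => ?_
      have := diag_mul_conj n N T (fun _ => 1) i
      simpa using this
    rw [h1, hmin] at h2
    exact_mod_cast h2.symm
  have hrow : ∀ i, ∑ k, ‖W i k‖ ^ 2 = 1 := by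
    intro i
    have h := diag_mul_conj n n W (fun _ => 1) i
    simp only [Complex.ofReal_one, Matrix.diagonal_one, Matrix.mul_one, hW1,
      Matrix.one_apply_eq, mul_one] at h
    exact_mod_cast h.symm
  have hcol : ∀ k, ∑ i, ‖W i k‖ ^ 2 = 1 := by
    intro k
    have h := diag_mul_conj n n Wᴴ (fun _ => 1) k
    simp only [Complex.ofReal_one, Matrix.diagonal_one, Matrix.mul_one, hW2,
      Matrix.one_apply_eq, mul_one, Matrix.conjTranspose_conjTranspose,
      Matrix.conjTranspose_apply, norm_star] at h
    exact_mod_cast h.symm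
  obtain ⟨c1, c2, c3⟩ := real_core N n hnN DA DB hDApos hDAmono hDBanti
    (fun i j => ‖T i j‖ ^ 2 * (DA j)⁻¹)
    (fun i j => mul_nonneg (sq_nonneg _) (inv_nonneg.2 (hDApos j).le))
    (fun i j hji => by simp [htri i j hji])
    (fun i k => ‖W i k‖ ^ 2) (fun i k => sq_nonneg _) hrow hcol hge
    (by
      rw [← htr]
      refine Finset.sum_congr rfl fun i _ => Finset.sum_congr rfl fun j _ => ?_
      have := (hDApos j).ne'
      field_simp)
  have hWoff : ∀ i k, i ≠ k → W i k = 0 := fun i k h => by simpa using c1 i k h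
  have hWdiag : ∀ i, ‖W i i‖ = 1 := by
    intro i
    have h := hrow i
    rw [Finset.sum_eq_single i (fun k _ hk => c1 i k hk.symm) (by simp)] at h
    nlinarith [norm_nonneg (W i i)]
  have hToff : ∀ (i : Fin n) (j : Fin N), (i : ℕ) ≠ j → T i j = 0 := by
    intro i j h
    have := (mul_eq_zero.1 (c2 i j h)).resolve_right (inv_ne_zero (hDApos j).ne')
    simpa using this
  have hTQ : ∀ i j, T i j = W i i * Q i j := by
    intro i j
    rw [hT, Matrix.mul_apply]
    exact Finset.sum_eq_single i (fun k _ hk => by rw [hWoff i k hk.symm, zero_mul]) (by simp)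
  refine ⟨Q, fun i j hij => ?_, fun i => ?_, hP⟩
  · have h := hToff i j hij
    rw [hTQ] at h
    refine (mul_eq_zero.1 h).resolve_left fun h0 => ?_
    have := hWdiag i
    rw [h0] at this
    simp at this
  · have h := c3 i
    simp only [hTQ, norm_mul, hWdiag, one_mul] at h
    rw [← h, ← Real.sqrt_sq (norm_nonneg (Q i (Fin.castLE hnN i)))]
    congr 1
    have := (hDApos (Fin.castLE hnN i)).ne'
    rw [Real.sqrt_sq (norm_nonneg _)]
    field_simp
end

section
/- Let n_T, n_R, B ≥ 1 be integers, let S_Q ∈ ℂ^{B×B} and S_R ∈ ℂ^{n_R×n_R} be Hermitian positive definite, let 𝓘_T ∈ ℂ^{n_T×n_T} and 𝓘_R ∈ ℂ^{n_R×n_R} be Hermitian positive semidefinite, and let c > 0. For P ∈ ℂ^{n_T×B} set P̃ = P^T ⊗ I_{n_R}. Then P̃^H (S_Q^T ⊗ S_R)^{-1} P̃ ⪰ c 𝓘_T^T ⊗ 𝓘_R holds if and only if P S_Q^{-1} P^H ⪰ c λ_max(S_R^{1/2} 𝓘_R S_R^{1/2}) 𝓘_T, where λ_max(S_R^{1/2}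 𝓘_R S_R^{1/2}) is the largest eigenvalue of the Hermitian matrix S_R^{1/2} 𝓘_R S_R^{1/2}. (Theorem 2: reduction of the Kronecker-structured constraint.) -/
open Matrix Finset
open scoped ComplexOrder Kronecker MatrixOrder

/-- The largest eigenvalue of a Hermitian matrix. -/
noncomputable def lmax {n : ℕ} {A : Matrix (Fin n) (Fin n) ℂ} (hA : A.IsHermitian) : ℝ :=
  ⨆ i, hA.eigenvalues i

/-- Theorem 2: the Kronecker-structured constraint
`P̃ᴴ (S_Qᵀ ⊗ S_R)⁻¹ P̃ ⪰ c 𝓘_Tᵀ ⊗ 𝓘_R` (with `P̃ = Pᵀ ⊗ I`) holds iff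
`P S_Q⁻¹ Pᴴ ⪰ c λ_max(S_R^{1/2} 𝓘_R S_R^{1/2}) 𝓘_T`. -/
theorem stmt2 (nT nR B : ℕ) (hnT : 1 ≤ nT) (hnR : 1 ≤ nR) (hB : 1 ≤ B)
    (SQ : Matrix (Fin B) (Fin B) ℂ) (hSQ : SQ.PosDef)
    (SR : Matrix (Fin nR) (Fin nR) ℂ) (hSR : SR.PosDef)
    (IT : Matrix (Fin nT) (Fin nT) ℂ) (hIT : IT.PosSemidef)
    (IR : Matrix (Fin nR) (Fin nR) ℂ) (hIR : IR.PosSemidef)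
    (c : ℝ) (hc : 0 < c)
    (P : Matrix (Fin nT) (Fin B) ℂ)
    (hM : (CFC.sqrt SR * IR * CFC.sqrt SR).IsHermitian) :
    ((Pᵀ ⊗ₖ (1 : Matrix (Fin nR) (Fin nR) ℂ))ᴴ * (SQᵀ ⊗ₖ SR)⁻¹ *
        (Pᵀ ⊗ₖ (1 : Matrix (Fin nR) (Fin nR) ℂ))
      - ((c : ℂ) • (ITᵀ ⊗ₖ IR))).PosSemidef ↔
    (P * SQ⁻¹ * Pᴴ - ((c * lmax hM : ℝ) : ℂ) • IT).PosSemidef := by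
  classical
  have : Nonempty (Fin nR) := ⟨⟨0, hnR⟩⟩
  obtain ⟨R, hR⟩ : ∃ R, R = CFC.sqrt SR := ⟨_, rfl⟩
  have hRR : R * R = SR := by
    rw [hR]
    exact CFC.sqrt_mul_sqrt_self SR (Matrix.nonneg_iff_posSemidef.mpr hSR.posSemidef)
  have hRH : Rᴴ = R := by
    rw [hR]
    exact (Matrix.nonneg_iff_posSemidef.mp (CFC.sqrt_nonneg SR)).isHermitian
  have hSRdet : IsUnit SR.det := (Matrix.isUnit_iff_isUnit_det _).mp hSR.isUnit
  have hRdet : IsUnit R.det := by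
    rw [← hRR, Matrix.det_mul] at hSRdet
    exact isUnit_of_mul_isUnit_left hSRdet
  have hRinv : R * SR⁻¹ * R = 1 := by
    rw [← hRR, Matrix.mul_inv_rev, ← Matrix.mul_assoc, Matrix.mul_nonsing_inv _ hRdet,
      Matrix.one_mul, Matrix.nonsing_inv_mul _ hRdet]
  obtain ⟨V, hV⟩ : ∃ V : Matrix (Fin nR) (Fin nR) ℂ, V = hM.eigenvectorUnitary := ⟨_, rfl⟩
  have hVV : Vᴴ * V = 1 := by
    rw [hV]; exact Unitary.coe_star_mul_self hM.eigenvectorUnitary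
  have hspec : R * IR * R
      = V * diagonal (fun i => (hM.eigenvalues i : ℂ)) * Vᴴ := by
    have h := hM.spectral_theorem
    rw [Unitary.conjStarAlgAut_apply, ← hV] at h
    exact (by rw [hR] : R * IR * R = CFC.sqrt SR * IR * CFC.sqrt SR).trans h
  have hVdet : IsUnit V.det := by
    have h := congrArg Matrix.det hVV
    rw [Matrix.det_mul, Matrix.det_one] at h
    exact IsUnit.of_mul_eq_one_right _ h
  have hT1 : (R * V)ᴴ * SR⁻¹ * (R * V) = 1 := by
    rw [Matrix.conjTranspose_mul, hRH]
    calc Vᴴ * R * SR⁻¹ * (R * V) = Vᴴ * (R * SR⁻¹ * R) * V := by simp only [Matrix.mul_assoc]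
      _ = 1 := by rw [hRinv, Matrix.mul_one, hVV]
  have hT2 : (R * V)ᴴ * IR * (R * V) = diagonal (fun i => (hM.eigenvalues i : ℂ)) := by
    rw [Matrix.conjTranspose_mul, hRH]
    calc Vᴴ * R * IR * (R * V) = Vᴴ * (R * IR * R) * V := by simp only [Matrix.mul_assoc]
      _ = (Vᴴ * V) * diagonal (fun i => (hM.eigenvalues i : ℂ)) * (Vᴴ * V) := by
        rw [hspec]; simp only [Matrix.mul_assoc]
      _ = _ := by rw [hVV, Matrix.one_mul, Matrix.mul_one]
  have hTu : IsUnit ((1 : Matrix (Fin nT) (Fin nT) ℂ) ⊗ₖ (R * V)) := by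
    rw [Matrix.isUnit_iff_isUnit_det, Matrix.det_kronecker, Matrix.det_mul]
    simp only [Matrix.det_one, one_pow, one_mul]
    exact (hRdet.mul hVdet).pow _
  obtain ⟨A, hA⟩ : ∃ A, A = P * SQ⁻¹ * Pᴴ := ⟨_, rfl⟩
  have hL : (Pᵀ ⊗ₖ (1 : Matrix (Fin nR) (Fin nR) ℂ))ᴴ * (SQᵀ ⊗ₖ SR)⁻¹ *
        (Pᵀ ⊗ₖ (1 : Matrix (Fin nR) (Fin nR) ℂ)) = Aᵀ ⊗ₖ SR⁻¹ := by
    rw [Matrix.inv_kronecker, Matrix.conjTranspose_kronecker, ← Matrix.mul_kronecker_mul,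
      ← Matrix.mul_kronecker_mul, Matrix.conjTranspose_one, Matrix.one_mul, Matrix.mul_one, hA,
      Matrix.transpose_mul, Matrix.transpose_mul, Matrix.transpose_nonsing_inv,
      Matrix.mul_assoc]
    rfl
  rw [hL, ← hA, ← hTu.posSemidef_star_left_conjugate_iff]
  have hconj : star ((1 : Matrix (Fin nT) (Fin nT) ℂ) ⊗ₖ (R * V)) *
      (Aᵀ ⊗ₖ SR⁻¹ - (c : ℂ) • (ITᵀ ⊗ₖ IR)) * ((1 : Matrix (Fin nT) (Fin nT) ℂ) ⊗ₖ (R * V))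
      = Aᵀ ⊗ₖ (1 : Matrix (Fin nR) (Fin nR) ℂ)
        - (c : ℂ) • (ITᵀ ⊗ₖ diagonal (fun i => (hM.eigenvalues i : ℂ))) := by
    rw [Matrix.star_eq_conjTranspose, Matrix.conjTranspose_kronecker, Matrix.mul_sub,
      Matrix.sub_mul, Matrix.mul_smul, Matrix.smul_mul, ← Matrix.mul_kronecker_mul,
      ← Matrix.mul_kronecker_mul, ← Matrix.mul_kronecker_mul, ← Matrix.mul_kronecker_mul,
      hT1, hT2, Matrix.conjTranspose_one]
    simp only [Matrix.one_mul, Matrix.mul_one]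
  rw [hconj]
  constructor
  · intro h
    obtain ⟨k, hk⟩ := exists_eq_ciSup_of_finite (f := hM.eigenvalues)
    have h2 := (h.submatrix (fun i : Fin nT => (i, k))).transpose
    have he : A - ((c * lmax hM : ℝ) : ℂ) • IT =
        ((Aᵀ ⊗ₖ (1 : Matrix (Fin nR) (Fin nR) ℂ)
          - (c : ℂ) • (ITᵀ ⊗ₖ diagonal (fun i => (hM.eigenvalues i : ℂ)))).submatrix
          (fun i : Fin nT => (i, k)) (fun i : Fin nT => (i, k)))ᵀ := by
      ext i j
      simp [lmax, ← hk, Matrix.kroneckerMap_apply]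
      ring
    rw [he]
    exact h2
  · intro h
    have h1 := h.transpose.kronecker (PosSemidef.one (n := Fin nR) (R := ℂ))
    have hD : (diagonal (fun i => ((lmax hM - hM.eigenvalues i : ℝ) : ℂ))).PosSemidef := by
      refine PosSemidef.diagonal fun i => ?_
      have : hM.eigenvalues i ≤ lmax hM := le_ciSup (Set.finite_range _).bddAbove i
      simpa using this
    have h2 := (hIT.transpose.kronecker hD).smul (α := ℂ) (a := (c : ℂ)) (by exact_mod_cast hc.le)
    have he : Aᵀ ⊗ₖ (1 : Matrix (Fin nR) (Fin nR) ℂ)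
          - (c : ℂ) • (ITᵀ ⊗ₖ diagonal (fun i => (hM.eigenvalues i : ℂ))) =
        (A - ((c * lmax hM : ℝ) : ℂ) • IT)ᵀ ⊗ₖ (1 : Matrix (Fin nR) (Fin nR) ℂ) +
          (c : ℂ) • (ITᵀ ⊗ₖ diagonal (fun i => ((lmax hM - hM.eigenvalues i : ℝ) : ℂ))) := by
      ext ⟨i, k⟩ ⟨j, l⟩
      by_cases hkl : k = l
      · subst hkl
        simp [Matrix.kroneckerMap_apply]
        ring
      · simp [Matrix.kroneckerMap_apply, hkl]
    rw [he]
    exact h1.add h2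
end

section
/- Let n_T, n_R, B ≥ 1 be integers, let S_Q ∈ ℂ^{B×B} and S_R ∈ ℂ^{n_R×n_R} be Hermitian positive definite, let R_T ∈ ℂ^{n_T×n_T} be Hermitian positive definite, let 𝓘_T ∈ ℂ^{n_T×n_T} and 𝓘_R ∈ ℂ^{n_R×n_R} be Hermitian positive semidefinite, and let c > 0. Assume the receive covariances coincide: R_R = S_R, and set R = R_T^T ⊗ R_R. For P ∈ ℂ^{n_T×B} set P̃ = P^T ⊗ I_{n_R}. Then R^{-1} + P̃^H (S_Q^T ⊗ S_R)^{-1} P̃ ⪰ c 𝓘_T^T ⊗ 𝓘_R holds if and only if P S_Q^{-1} P^H ⪰ c λ_max(S_R^{1/2} 𝓘_R S_R^{1/2}) 𝓘_T − R_T^{-1}. (Theorem 3, case R_R = S_R.) -/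
open Matrix Finset
open scoped ComplexOrder Kronecker MatrixOrder

/-- Theorem 3 (case `R_R = S_R`): with `R = R_Tᵀ ⊗ R_R` and `R_R = S_R`, the constraint
`R⁻¹ + P̃ᴴ (S_Qᵀ ⊗ S_R)⁻¹ P̃ ⪰ c 𝓘_Tᵀ ⊗ 𝓘_R` (with `P̃ = Pᵀ ⊗ I`) holds iff
`P S_Q⁻¹ Pᴴ ⪰ c λ_max(S_R^{1/2} 𝓘_R S_R^{1/2}) 𝓘_T − R_T⁻¹`. -/
theorem stmt3 (nT nR B : ℕ) (hnT : 1 ≤ nT) (hnR : 1 ≤ nR) (hB : 1 ≤ B)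
    (SQ : Matrix (Fin B) (Fin B) ℂ) (hSQ : SQ.PosDef)
    (SR : Matrix (Fin nR) (Fin nR) ℂ) (hSR : SR.PosDef)
    (RT : Matrix (Fin nT) (Fin nT) ℂ) (hRT : RT.PosDef)
    (IT : Matrix (Fin nT) (Fin nT) ℂ) (hIT : IT.PosSemidef)
    (IR : Matrix (Fin nR) (Fin nR) ℂ) (hIR : IR.PosSemidef)
    (c : ℝ) (hc : 0 < c)
    (P : Matrix (Fin nT) (Fin B) ℂ)
    (hM : (CFC.sqrt SR * IR * CFC.sqrt SR).IsHermitian) :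
    ((RTᵀ ⊗ₖ SR)⁻¹ +
        (Pᵀ ⊗ₖ (1 : Matrix (Fin nR) (Fin nR) ℂ))ᴴ * (SQᵀ ⊗ₖ SR)⁻¹ *
          (Pᵀ ⊗ₖ (1 : Matrix (Fin nR) (Fin nR) ℂ))
      - ((c : ℂ) • (ITᵀ ⊗ₖ IR))).PosSemidef ↔
    (P * SQ⁻¹ * Pᴴ - (((c * lmax hM : ℝ) : ℂ) • IT - RT⁻¹)).PosSemidef := by
  classical
  obtain ⟨hS0, hSS, hSu⟩ : (CFC.sqrt SR).IsHermitian ∧ CFC.sqrt SR * CFC.sqrt SR = SR ∧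
      IsUnit (CFC.sqrt SR) := by
    have h0 : (0 : Matrix (Fin nR) (Fin nR) ℂ) ≤ SR := hSR.posSemidef.nonneg
    have hss := CFC.sqrt_mul_sqrt_self SR h0
    refine ⟨(CFC.sqrt_nonneg SR).posSemidef.isHermitian, hss, ?_⟩
    have hu := hSR.isUnit
    rw [← hss] at hu
    exact isUnit_of_mul_isUnit_left hu
  have hdiag : ∃ U : Matrix (Fin nR) (Fin nR) ℂ, IsUnit U ∧ Uᴴ * U = 1 ∧
      Uᴴ * (CFC.sqrt SR * IR * CFC.sqrt SR) * U =
        diagonal (fun i => (hM.eigenvalues i : ℂ)) := by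
    refine ⟨hM.eigenvectorUnitary, Unitary.isUnit_coe, ?_, ?_⟩
    · exact Unitary.coe_star_mul_self hM.eigenvectorUnitary
    · have := hM.conjStarAlgAut_star_eigenvectorUnitary
      rw [Unitary.conjStarAlgAut_star_apply] at this
      exact this
  obtain ⟨U, hUu, hUU, hUM⟩ := hdiag
  have hle : ∀ i, hM.eigenvalues i ≤ lmax hM := fun i =>
    le_ciSup (Set.finite_range _).bddAbove i
  obtain ⟨i₀, hi₀⟩ : ∃ i, hM.eigenvalues i = lmax hM := by
    have : Nonempty (Fin nR) := ⟨⟨0, hnR⟩⟩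
    exact exists_eq_ciSup_of_finite
  generalize hM.eigenvalues = d at *
  generalize lmax hM = l at *
  clear hM
  generalize CFC.sqrt SR = S at *
  -- the congruence matrix
  have hT1 : (S * U)ᴴ * SR⁻¹ * (S * U) = 1 := by
    have hSd : IsUnit S.det := (Matrix.isUnit_iff_isUnit_det S).1 hSu
    rw [← hSS, Matrix.mul_inv_rev, conjTranspose_mul, hS0.eq]
    calc Uᴴ * S * (S⁻¹ * S⁻¹) * (S * U) = Uᴴ * (S * S⁻¹) * (S⁻¹ * S) * U := by
          simp only [Matrix.mul_assoc]
      _ = 1 := by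
          rw [Matrix.mul_nonsing_inv _ hSd, Matrix.nonsing_inv_mul _ hSd]
          simpa using hUU
  have hT2 : (S * U)ᴴ * IR * (S * U) = diagonal (fun i => (d i : ℂ)) := by
    rw [← hUM, conjTranspose_mul, hS0.eq]
    simp only [Matrix.mul_assoc]
  have hTu : IsUnit (S * U) := hSu.mul hUu
  generalize S * U = T at *
  have hK : IsUnit ((1 : Matrix (Fin nT) (Fin nT) ℂ) ⊗ₖ T) := isUnit_one.kronecker hTu
  obtain ⟨A, hA⟩ : ∃ A, A = RT⁻¹ + P * SQ⁻¹ * Pᴴ := ⟨_, rfl⟩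
  have hX : (RTᵀ ⊗ₖ SR)⁻¹ +
        (Pᵀ ⊗ₖ (1 : Matrix (Fin nR) (Fin nR) ℂ))ᴴ * (SQᵀ ⊗ₖ SR)⁻¹ *
          (Pᵀ ⊗ₖ (1 : Matrix (Fin nR) (Fin nR) ℂ))
      - ((c : ℂ) • (ITᵀ ⊗ₖ IR)) = Aᵀ ⊗ₖ SR⁻¹ - ((c : ℂ) • (ITᵀ ⊗ₖ IR)) := by
    congr 1
    rw [inv_kronecker, inv_kronecker, conjTranspose_kronecker, ← mul_kronecker_mul,
      ← mul_kronecker_mul, hA, conjTranspose_one, Matrix.one_mul, Matrix.mul_one,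
      ← add_kronecker]
    congr 1
    simp only [transpose_add, transpose_mul, transpose_nonsing_inv, Matrix.mul_assoc]
    rfl
  have hY : star ((1 : Matrix (Fin nT) (Fin nT) ℂ) ⊗ₖ T) *
      (Aᵀ ⊗ₖ SR⁻¹ - ((c : ℂ) • (ITᵀ ⊗ₖ IR))) * ((1 : Matrix (Fin nT) (Fin nT) ℂ) ⊗ₖ T) =
      Aᵀ ⊗ₖ (1 : Matrix (Fin nR) (Fin nR) ℂ) -
        (c : ℂ) • (ITᵀ ⊗ₖ diagonal (fun i => (d i : ℂ))) := by
    rw [star_eq_conjTranspose, conjTranspose_kronecker, Matrix.mul_sub, Matrix.sub_mul,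
      Matrix.mul_smul, Matrix.smul_mul, ← mul_kronecker_mul, ← mul_kronecker_mul,
      ← mul_kronecker_mul, ← mul_kronecker_mul, hT1, hT2]
    simp
  have hZ : P * SQ⁻¹ * Pᴴ - (((c * l : ℝ) : ℂ) • IT - RT⁻¹) = A - ((c * l : ℝ) : ℂ) • IT := by
    rw [hA]; abel
  rw [hX, hZ, ← Matrix.IsUnit.posSemidef_star_left_conjugate_iff hK, hY]
  constructor
  · intro h
    have h2 := (h.submatrix (fun j : Fin nT => (j, i₀))).transpose
    have he : A - ((c * l : ℝ) : ℂ) • IT =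
        ((Aᵀ ⊗ₖ (1 : Matrix (Fin nR) (Fin nR) ℂ) -
          (c : ℂ) • (ITᵀ ⊗ₖ diagonal (fun i => (d i : ℂ)))).submatrix
            (fun j : Fin nT => (j, i₀)) (fun j : Fin nT => (j, i₀)))ᵀ := by
      ext i j
      simp [hi₀]
      ring
    rw [he]
    exact h2
  · intro h
    have h1 := h.transpose.kronecker (PosSemidef.one (n := Fin nR) (R := ℂ))
    have hD : (diagonal (fun i => ((c * (l - d i) : ℝ) : ℂ))).PosSemidef := by
      rw [posSemidef_diagonal_iff]
      intro i
      exact_mod_cast mul_nonneg hc.le (sub_nonneg.2 (hle i))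
    have h2 := h1.add (hIT.transpose.kronecker hD)
    have he : Aᵀ ⊗ₖ (1 : Matrix (Fin nR) (Fin nR) ℂ) -
          (c : ℂ) • (ITᵀ ⊗ₖ diagonal (fun i => (d i : ℂ))) =
        (A - ((c * l : ℝ) : ℂ) • IT)ᵀ ⊗ₖ (1 : Matrix (Fin nR) (Fin nR) ℂ) +
          ITᵀ ⊗ₖ diagonal (fun i => ((c * (l - d i) : ℝ) : ℂ)) := by
      ext ⟨i, a⟩ ⟨j, b⟩
      by_cases hab : a = b
      · subst hab
        simp
        ring
      · simp [hab]
    rw [he]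
    exact h2
end

section
/- Let n_T, n_R, B ≥ 1 be integers, let S_Q ∈ ℂ^{B×B} and S_R ∈ ℂ^{n_R×n_R} be Hermitian positive definite, let R_T ∈ ℂ^{n_T×n_T} and R_R ∈ ℂ^{n_R×n_R} be Hermitian positive definite, let 𝓘_T ∈ ℂ^{n_T×n_T} be Hermitian positive semidefinite, and let c > 0. Assume 𝓘_R = R_R^{-1} and that c 𝓘_T − R_T^{-1} is positive semidefinite, and set R = R_T^T ⊗ R_R. For P ∈ ℂ^{n_T×B} set P̃ = P^T ⊗ I_{n_R}. Then R^{-1} + P̃^H (S_Q^T ⊗ S_R)^{-1} P̃ ⪰ c 𝓘_T^T ⊗ 𝓘_R holds if and only if P S_Q^{-1} P^H ⪰ λ_max(S_R^{1/2} 𝓘_R S_R^{1/2}) (c 𝓘_T − R_T^{-1}). (Theorem 3, case 𝓘_R = R_R^{-1}.) -/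
open Matrix Finset
open scoped ComplexOrder Kronecker MatrixOrder

theorem kron_psd_aux {n m : Type*} [Fintype n] [DecidableEq n] [Fintype m] [DecidableEq m]
    [Nonempty m] (A D : Matrix n n ℂ) (hD : D.PosSemidef) (e : m → ℝ) :
    (Aᵀ ⊗ₖ (1 : Matrix m m ℂ) - Dᵀ ⊗ₖ (diagonal (fun i => (e i : ℂ)))).PosSemidef ↔
      (A - ((⨆ i, e i : ℝ) : ℂ) • D).PosSemidef := by
  constructor
  · intro h
    obtain ⟨i, hi⟩ := exists_eq_ciSup_of_finite (f := e)
    rw [← hi, ← posSemidef_transpose_iff]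
    have h3 := h.submatrix (fun a : n => (a, i))
    have h4 : (A - (e i : ℂ) • D)ᵀ = (Aᵀ ⊗ₖ (1 : Matrix m m ℂ) -
        Dᵀ ⊗ₖ (diagonal (fun i => (e i : ℂ)))).submatrix (fun a : n => (a, i))
          (fun a : n => (a, i)) := by
      ext a b
      simp [mul_comm]
    rw [h4]
    exact h3
  · intro h
    have h2 : (diagonal (fun i => (((⨆ i, e i) - e i : ℝ) : ℂ)) : Matrix m m ℂ).PosSemidef := by
      rw [posSemidef_diagonal_iff]
      intro i
      rw [Complex.zero_le_real, sub_nonneg]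
      exact le_ciSup (Set.finite_range e).bddAbove i
    have h1 : (1 : Matrix m m ℂ).PosSemidef := PosSemidef.one
    have h3 := (h.transpose.kronecker h1).add (hD.transpose.kronecker h2)
    have h4 : Aᵀ ⊗ₖ (1 : Matrix m m ℂ) - Dᵀ ⊗ₖ (diagonal (fun i => (e i : ℂ))) =
        (A - ((⨆ i, e i : ℝ) : ℂ) • D)ᵀ ⊗ₖ (1 : Matrix m m ℂ) +
          Dᵀ ⊗ₖ (diagonal (fun i => (((⨆ i, e i) - e i : ℝ) : ℂ))) := by
      ext ⟨a, i⟩ ⟨b, j⟩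
      by_cases hij : i = j
      · subst hij
        simp
        ring
      · simp [hij]
    rw [h4]
    exact h3

theorem simul_diag_aux {m : Type*} [Fintype m] [DecidableEq m] (S R : Matrix m m ℂ)
    (hS : S.PosDef) (hM : (CFC.sqrt S * R * CFC.sqrt S).IsHermitian) :
    ∃ W : Matrix m m ℂ, IsUnit W ∧ star W * S⁻¹ * W = 1 ∧
      star W * R * W = diagonal (fun i => (hM.eigenvalues i : ℂ)) := by
  have hsq : CFC.sqrt S * CFC.sqrt S = S := CFC.sqrt_mul_sqrt_self S hS.posSemidef.nonneg
  have hst : star (CFC.sqrt S) = CFC.sqrt S := (CFC.sqrt_nonneg S).isSelfAdjoint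
  have hSu : IsUnit S := hS.isUnit
  have hu : IsUnit (CFC.sqrt S) := by
    rw [isUnit_iff_isUnit_det] at hSu ⊢
    rw [← hsq, det_mul] at hSu
    exact isUnit_of_mul_isUnit_left hSu
  have hud := (isUnit_iff_isUnit_det _).1 hu
  set Q := CFC.sqrt S
  have hUU : star (hM.eigenvectorUnitary : Matrix m m ℂ) * (hM.eigenvectorUnitary : Matrix m m ℂ) = 1 :=
    Unitary.coe_star_mul_self _
  have hUu : IsUnit (hM.eigenvectorUnitary : Matrix m m ℂ) :=
    ⟨Unitary.toUnits hM.eigenvectorUnitary, rfl⟩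
  have hsp := hM.conjStarAlgAut_star_eigenvectorUnitary
  rw [Unitary.conjStarAlgAut_star_apply] at hsp
  refine ⟨Q * (hM.eigenvectorUnitary : Matrix m m ℂ), hu.mul hUu, ?_, ?_⟩
  · rw [star_mul, hst, ← hsq, Matrix.mul_inv_rev]
    calc _ = star (hM.eigenvectorUnitary : Matrix m m ℂ) * ((Q * Q⁻¹) * (Q⁻¹ * Q)) *
          (hM.eigenvectorUnitary : Matrix m m ℂ) := by simp only [Matrix.mul_assoc]
      _ = 1 := by rw [Matrix.mul_nonsing_inv _ hud, Matrix.nonsing_inv_mul _ hud]; simp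
  · rw [star_mul, hst]
    generalize (hM.eigenvectorUnitary : Matrix m m ℂ) = U at hsp
    have h5 : star U * Q * R * (Q * U) = star U * (Q * R * Q) * U := by
      simp only [Matrix.mul_assoc]
    exact h5.trans hsp

/-- Theorem 3 (case `𝓘_R = R_R⁻¹`): with `R = R_Tᵀ ⊗ R_R`, `𝓘_R = R_R⁻¹`, and
`c 𝓘_T − R_T⁻¹ ⪰ 0`, the constraint
`R⁻¹ + P̃ᴴ (S_Qᵀ ⊗ S_R)⁻¹ P̃ ⪰ c 𝓘_Tᵀ ⊗ 𝓘_R` (with `P̃ = Pᵀ ⊗ I`) holds iff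
`P S_Q⁻¹ Pᴴ ⪰ λ_max(S_R^{1/2} 𝓘_R S_R^{1/2}) (c 𝓘_T − R_T⁻¹)`. -/
theorem stmt4 (nT nR B : ℕ) (hnT : 1 ≤ nT) (hnR : 1 ≤ nR) (hB : 1 ≤ B)
    (SQ : Matrix (Fin B) (Fin B) ℂ) (hSQ : SQ.PosDef)
    (SR : Matrix (Fin nR) (Fin nR) ℂ) (hSR : SR.PosDef)
    (RT : Matrix (Fin nT) (Fin nT) ℂ) (hRT : RT.PosDef)
    (RR : Matrix (Fin nR) (Fin nR) ℂ) (hRR : RR.PosDef)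
    (IT : Matrix (Fin nT) (Fin nT) ℂ) (hIT : IT.PosSemidef)
    (IR : Matrix (Fin nR) (Fin nR) ℂ) (hIR : IR.PosSemidef)
    (hIReq : IR = RR⁻¹)
    (c : ℝ) (hc : 0 < c)
    (hcIT : ((c : ℂ) • IT - RT⁻¹).PosSemidef)
    (P : Matrix (Fin nT) (Fin B) ℂ)
    (hM : (CFC.sqrt SR * IR * CFC.sqrt SR).IsHermitian) :
    ((RTᵀ ⊗ₖ RR)⁻¹ +
        (Pᵀ ⊗ₖ (1 : Matrix (Fin nR) (Fin nR) ℂ))ᴴ * (SQᵀ ⊗ₖ SR)⁻¹ *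
          (Pᵀ ⊗ₖ (1 : Matrix (Fin nR) (Fin nR) ℂ))
      - ((c : ℂ) • (ITᵀ ⊗ₖ IR))).PosSemidef ↔
    (P * SQ⁻¹ * Pᴴ - ((lmax hM : ℝ) : ℂ) • ((c : ℂ) • IT - RT⁻¹)).PosSemidef := by
  obtain ⟨W, hW, hW1, hW2⟩ := simul_diag_aux SR IR hSR hM
  have : Nonempty (Fin nR) := ⟨⟨0, hnR⟩⟩
  have hV : IsUnit ((1 : Matrix (Fin nT) (Fin nT) ℂ) ⊗ₖ W) := isUnit_one.kronecker hW
  unfold lmax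
  rw [← kron_psd_aux _ _ hcIT, ← hV.posSemidef_star_left_conjugate_iff]
  have e1 : (RTᵀ ⊗ₖ RR)⁻¹ = (RT⁻¹)ᵀ ⊗ₖ IR := by
    rw [inv_kronecker, hIReq, transpose_nonsing_inv]
  have e2 : (Pᵀ ⊗ₖ (1 : Matrix (Fin nR) (Fin nR) ℂ))ᴴ * (SQᵀ ⊗ₖ SR)⁻¹ *
          (Pᵀ ⊗ₖ (1 : Matrix (Fin nR) (Fin nR) ℂ)) = (P * SQ⁻¹ * Pᴴ)ᵀ ⊗ₖ SR⁻¹ := by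
    rw [inv_kronecker, conjTranspose_kronecker, ← mul_kronecker_mul, ← mul_kronecker_mul]
    simp only [conjTranspose_one, Matrix.one_mul, Matrix.mul_one, transpose_mul,
      transpose_nonsing_inv, Matrix.mul_assoc]
    rfl
  have e3 : (RT⁻¹)ᵀ ⊗ₖ IR + (P * SQ⁻¹ * Pᴴ)ᵀ ⊗ₖ SR⁻¹ - ((c : ℂ) • (ITᵀ ⊗ₖ IR)) =
      (P * SQ⁻¹ * Pᴴ)ᵀ ⊗ₖ SR⁻¹ - ((c : ℂ) • IT - RT⁻¹)ᵀ ⊗ₖ IR := by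
    ext ⟨a, i⟩ ⟨b, j⟩
    simp only [Matrix.add_apply, Matrix.sub_apply, Matrix.smul_apply, kronecker_apply, transpose_apply, smul_eq_mul]
    ring
  rw [e1, e2, e3, Matrix.mul_sub, Matrix.sub_mul, star_eq_conjTranspose, conjTranspose_kronecker]
  simp only [← mul_kronecker_mul, conjTranspose_one, Matrix.one_mul, Matrix.mul_one]
  rw [← star_eq_conjTranspose, hW1, hW2]
end

section
/- Let n_T, n_R, B ≥ 1 be integers, let S_Q ∈ ℂ^{B×B} and S_R ∈ ℂ^{n_R×n_R} be Hermitian positive definite, let R_T ∈ ℂ^{n_T×n_T} and R_R ∈ ℂ^{n_R×n_R} be Hermitian positive definite, let 𝓘_R ∈ ℂ^{n_R×n_R} be Hermitian positive semidefinite, and let c > 0. Assume 𝓘_T = R_T^{-1}, and set R = R_T^T ⊗ R_R. For P ∈ ℂ^{n_T×B} set P̃ = P^T ⊗ I_{n_R}. Then R^{-1} + P̃^H (S_Q^T ⊗ S_R)^{-1} P̃ ⪰ c 𝓘_T^T ⊗ 𝓘_R holds if and only if P S_Q^{-1} P^H ⪰ λ_max(S_R^{1/2} (c 𝓘_R − R_R^{-1})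 S_R^{1/2}) 𝓘_T, where λ_max denotes the largest eigenvalue of the indicated Hermitian matrix. (Theorem 3, case 𝓘_T = R_T^{-1}.) -/
open Matrix Finset
open scoped ComplexOrder Kronecker MatrixOrder

/-- Theorem 3 (case `𝓘_T = R_T⁻¹`): with `R = R_Tᵀ ⊗ R_R` and `𝓘_T = R_T⁻¹`, the constraint
`R⁻¹ + P̃ᴴ (S_Qᵀ ⊗ S_R)⁻¹ P̃ ⪰ c 𝓘_Tᵀ ⊗ 𝓘_R` (with `P̃ = Pᵀ ⊗ I`) holds iff
`P S_Q⁻¹ Pᴴ ⪰ λ_max(S_R^{1/2} (c 𝓘_R − R_R⁻¹) S_R^{1/2}) 𝓘_T`. -/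
theorem stmt5 (nT nR B : ℕ) (hnT : 1 ≤ nT) (hnR : 1 ≤ nR) (hB : 1 ≤ B)
    (SQ : Matrix (Fin B) (Fin B) ℂ) (hSQ : SQ.PosDef)
    (SR : Matrix (Fin nR) (Fin nR) ℂ) (hSR : SR.PosDef)
    (RT : Matrix (Fin nT) (Fin nT) ℂ) (hRT : RT.PosDef)
    (RR : Matrix (Fin nR) (Fin nR) ℂ) (hRR : RR.PosDef)
    (IT : Matrix (Fin nT) (Fin nT) ℂ) (hIT : IT.PosSemidef)
    (hITeq : IT = RT⁻¹)
    (IR : Matrix (Fin nR) (Fin nR) ℂ) (hIR : IR.PosSemidef)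
    (c : ℝ) (hc : 0 < c)
    (P : Matrix (Fin nT) (Fin B) ℂ)
    (hM : (CFC.sqrt SR * ((c : ℂ) • IR - RR⁻¹) *
      CFC.sqrt SR).IsHermitian) :
    ((RTᵀ ⊗ₖ RR)⁻¹ +
        (Pᵀ ⊗ₖ (1 : Matrix (Fin nR) (Fin nR) ℂ))ᴴ * (SQᵀ ⊗ₖ SR)⁻¹ *
          (Pᵀ ⊗ₖ (1 : Matrix (Fin nR) (Fin nR) ℂ))
      - ((c : ℂ) • (ITᵀ ⊗ₖ IR))).PosSemidef ↔
    (P * SQ⁻¹ * Pᴴ - ((lmax hM : ℝ) : ℂ) • IT).PosSemidef := by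
  have key : (RTᵀ ⊗ₖ RR)⁻¹ +
        (Pᵀ ⊗ₖ (1 : Matrix (Fin nR) (Fin nR) ℂ))ᴴ * (SQᵀ ⊗ₖ SR)⁻¹ *
          (Pᵀ ⊗ₖ (1 : Matrix (Fin nR) (Fin nR) ℂ))
      - ((c : ℂ) • (ITᵀ ⊗ₖ IR)) =
      (P * SQ⁻¹ * Pᴴ)ᵀ ⊗ₖ SR⁻¹ - ITᵀ ⊗ₖ ((c : ℂ) • IR - RR⁻¹) := by
    have e1 : (P * SQ⁻¹ * Pᴴ)ᵀ = Pᵀᴴ * SQᵀ⁻¹ * Pᵀ := by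
      rw [transpose_mul, transpose_mul, transpose_nonsing_inv, ← Matrix.mul_assoc]
      rfl
    rw [inv_kronecker, inv_kronecker, conjTranspose_kronecker, conjTranspose_one,
      ← mul_kronecker_mul, ← mul_kronecker_mul, one_mul, mul_one, ← e1,
      ← transpose_nonsing_inv, ← hITeq]
    ext ⟨a, b⟩ ⟨i, j⟩
    simp only [Matrix.sub_apply, Matrix.add_apply, kroneckerMap_apply, Matrix.smul_apply, smul_eq_mul]
    ring
  rw [key]
  set K := (c : ℂ) • IR - RR⁻¹ with hK
  generalize P * SQ⁻¹ * Pᴴ = A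
  have hS0 : (0 : Matrix (Fin nR) (Fin nR) ℂ) ≤ SR := hSR.posSemidef.nonneg
  have hSS : CFC.sqrt SR * CFC.sqrt SR = SR := CFC.sqrt_mul_sqrt_self SR hS0
  have hSh : (CFC.sqrt SR)ᴴ = CFC.sqrt SR := (CFC.sqrt_nonneg SR).star_eq
  have hspec := hM.conjStarAlgAut_star_eigenvectorUnitary
  rw [Unitary.conjStarAlgAut_star_apply] at hspec
  have hU1 : star (hM.eigenvectorUnitary : Matrix (Fin nR) (Fin nR) ℂ) *
    (hM.eigenvectorUnitary : Matrix (Fin nR) (Fin nR) ℂ) = 1 := Unitary.coe_star_mul_self _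
  have hU2 : (hM.eigenvectorUnitary : Matrix (Fin nR) (Fin nR) ℂ) *
    star (hM.eigenvectorUnitary : Matrix (Fin nR) (Fin nR) ℂ) = 1 := Unitary.coe_mul_star_self _
  have hd : ∀ i, hM.eigenvalues i ≤ lmax hM := fun i =>
    le_ciSup (Set.finite_range _).bddAbove i
  have : Nonempty (Fin nR) := ⟨⟨0, hnR⟩⟩
  obtain ⟨i₀, hi₀⟩ : ∃ i, hM.eigenvalues i = lmax hM := exists_eq_ciSup_of_finite
  generalize lmax hM = l at *
  generalize hM.eigenvalues = d at *
  generalize (hM.eigenvectorUnitary : Matrix (Fin nR) (Fin nR) ℂ) = U at *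
  generalize CFC.sqrt SR = S at *
  have hSdet : IsUnit SR.det := (Matrix.isUnit_iff_isUnit_det _).1 hSR.isUnit
  have hSu : IsUnit S.det := by
    rw [← hSS, det_mul] at hSdet
    exact isUnit_of_mul_isUnit_left hSdet
  have hSinv : S * SR⁻¹ * S = 1 := by
    rw [← hSS, Matrix.mul_inv_rev, ← mul_assoc, mul_nonsing_inv _ hSu, one_mul,
      nonsing_inv_mul _ hSu]
  rw [star_eq_conjTranspose] at hspec hU1 hU2
  have hconj : ((1 : Matrix (Fin nT) (Fin nT) ℂ) ⊗ₖ (S * U))ᴴ *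
      (Aᵀ ⊗ₖ SR⁻¹ - ITᵀ ⊗ₖ K) * ((1 : Matrix (Fin nT) (Fin nT) ℂ) ⊗ₖ (S * U)) =
      Aᵀ ⊗ₖ (1 : Matrix (Fin nR) (Fin nR) ℂ) - ITᵀ ⊗ₖ diagonal (RCLike.ofReal ∘ d) := by
    rw [conjTranspose_kronecker, conjTranspose_one, mul_sub, sub_mul, ← mul_kronecker_mul,
      ← mul_kronecker_mul, ← mul_kronecker_mul, ← mul_kronecker_mul, conjTranspose_mul, hSh,
      ← hspec]
    have e1 : Uᴴ * S * SR⁻¹ * (S * U) = 1 := by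
      calc _ = Uᴴ * (S * SR⁻¹ * S) * U := by simp only [mul_assoc]
        _ = 1 := by rw [hSinv, mul_one, hU1]
    rw [e1]
    simp only [mul_assoc, one_mul, mul_one]
  have hWu : IsUnit ((1 : Matrix (Fin nT) (Fin nT) ℂ) ⊗ₖ (S * U)) := by
    refine (Matrix.isUnit_iff_isUnit_det _).2 ?_
    have : IsUnit (S * U).det := by
      rw [det_mul]
      exact hSu.mul ((Matrix.isUnit_iff_isUnit_det _).1 (IsUnit.of_mul_eq_one _ hU2))
    rw [det_kronecker]
    simpa using this.pow _
  have hiff := hWu.posSemidef_star_left_conjugate_iff (x := Aᵀ ⊗ₖ SR⁻¹ - ITᵀ ⊗ₖ K)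
  rw [star_eq_conjTranspose, hconj] at hiff
  rw [← hiff]
  constructor
  · intro h
    have h2 := (h.submatrix (fun a => (a, i₀))).transpose
    have e : A - (l : ℂ) • IT = ((Aᵀ ⊗ₖ (1 : Matrix (Fin nR) (Fin nR) ℂ) -
        ITᵀ ⊗ₖ diagonal (RCLike.ofReal ∘ d)).submatrix
        (fun a => (a, i₀)) (fun a => (a, i₀)))ᵀ := by
      ext a b
      simp [hi₀, mul_comm]
    rw [e]
    exact h2
  · intro h
    have h1 := h.transpose.kronecker (PosSemidef.one (n := Fin nR) (R := ℂ))
    have h3 : (diagonal (fun i => ((l - d i : ℝ) : ℂ))).PosSemidef := by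
      refine PosSemidef.diagonal fun i => ?_
      simpa using hd i
    have h2 := hIT.transpose.kronecker h3
    have e : Aᵀ ⊗ₖ (1 : Matrix (Fin nR) (Fin nR) ℂ) - ITᵀ ⊗ₖ diagonal (RCLike.ofReal ∘ d) =
        (A - (l : ℂ) • IT)ᵀ ⊗ₖ (1 : Matrix (Fin nR) (Fin nR) ℂ) +
          ITᵀ ⊗ₖ diagonal (fun i => ((l - d i : ℝ) : ℂ)) := by
      ext ⟨a, b⟩ ⟨i, j⟩
      by_cases hbj : b = j
      · subst hbj
        simp
        ring
      · simp [hbj]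
    rw [e]
    exact h1.add h2
end

section
/- Let n ≥ 1 and let D ∈ ℝ^{n×n} be a diagonal matrix with diagonal entries d_{1,1} > d_{2,2} > … > d_{n,n} > 0. If U ∈ ℂ^{n×n} is a unitary matrix such that the diagonal of U D U^H equals (d_{1,1}, …, d_{n,n}), i.e. (U D U^H)_{i,i} = d_{i,i} for every i, then U is diagonal with unimodular diagonal entries, i.e. U_{i,j} = 0 for i ≠ j and |U_{i,i}| = 1 for all i; consequently U D U^H = D. (Lemma 1.) -/
open Matrix Finset

/-- Lemma 1: if `U` is unitary and `U D Uᴴ` has the same diagonal `(d_1, …, d_n)` as the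
diagonal matrix `D` with strictly decreasing positive diagonal, then `U` is diagonal with
unimodular diagonal entries, and consequently `U D Uᴴ = D`. -/
theorem stmt7 (n : ℕ) (hn : 1 ≤ n) (d : Fin n → ℝ) (hd : StrictAnti d)
    (hdpos : ∀ i, 0 < d i)
    (U : Matrix (Fin n) (Fin n) ℂ) (hU : U ∈ Matrix.unitaryGroup (Fin n) ℂ)
    (hdiag : ∀ i, (U * Matrix.diagonal (fun k => (d k : ℂ)) * Uᴴ) i i = (d i : ℂ)) :
    (∀ i j, i ≠ j → U i j = 0) ∧ (∀ i, ‖U i i‖ = 1) ∧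
    U * Matrix.diagonal (fun k => (d k : ℂ)) * Uᴴ =
      Matrix.diagonal (fun k => (d k : ℂ)) := by
  have hUU : U * Uᴴ = 1 := (Matrix.mem_unitaryGroup_iff).1 hU
  have hUU' : Uᴴ * U = 1 := (Matrix.mem_unitaryGroup_iff').1 hU
  have hrow : ∀ i, ∑ k, Complex.normSq (U i k) = 1 := by
    intro i
    have h := congrFun (congrFun hUU i) i
    simp only [Matrix.mul_apply, Matrix.conjTranspose_apply, Matrix.one_apply_eq,
      Complex.star_def, Complex.mul_conj] at h
    exact_mod_cast h
  have hcol : ∀ k, ∑ i, Complex.normSq (U i k) = 1 := by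
    intro k
    have h := congrFun (congrFun hUU' k) k
    simp only [Matrix.mul_apply, Matrix.conjTranspose_apply, Matrix.one_apply_eq,
      Complex.star_def, mul_comm _ (U _ _), Complex.mul_conj] at h
    exact_mod_cast h
  have hdg : ∀ i, ∑ k, Complex.normSq (U i k) * d k = d i := by
    intro i
    have h := hdiag i
    rw [Matrix.mul_apply] at h
    simp only [Matrix.mul_diagonal, Matrix.conjTranspose_apply, Complex.star_def,
      mul_right_comm _ (Complex.ofReal _) (starRingEnd ℂ _), Complex.mul_conj] at h
    exact_mod_cast h
  have hzero : ∑ i, ∑ k, Complex.normSq (U i k) * (d i - d k) ^ 2 = 0 := by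
    have h1 : ∀ i, ∑ k, Complex.normSq (U i k) * (d i - d k) ^ 2
        = - d i ^ 2 + ∑ k, Complex.normSq (U i k) * d k ^ 2 := by
      intro i
      have : ∀ k, Complex.normSq (U i k) * (d i - d k) ^ 2 =
          d i ^ 2 * Complex.normSq (U i k) - 2 * d i * (Complex.normSq (U i k) * d k)
            + Complex.normSq (U i k) * d k ^ 2 := fun k => by ring
      simp only [this, Finset.sum_add_distrib, Finset.sum_sub_distrib, ← Finset.mul_sum,
        hrow, hdg]
      ring
    simp only [h1, Finset.sum_add_distrib]
    rw [Finset.sum_comm]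
    simp only [← Finset.sum_mul, hcol]
    simp
  have hnn : ∀ i k, 0 ≤ Complex.normSq (U i k) * (d i - d k) ^ 2 := fun i k =>
    mul_nonneg (Complex.normSq_nonneg _) (sq_nonneg _)
  have hoff : ∀ i j, i ≠ j → U i j = 0 := by
    intro i j hij
    have h1 := (Finset.sum_eq_zero_iff_of_nonneg
      (fun i _ => Finset.sum_nonneg (fun k _ => hnn i k))).1 hzero i (Finset.mem_univ i)
    have h2 := (Finset.sum_eq_zero_iff_of_nonneg
      (fun k _ => hnn i k)).1 h1 j (Finset.mem_univ j)
    rcases mul_eq_zero.1 h2 with h | h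
    · exact Complex.normSq_eq_zero.1 h
    · exact absurd (hd.injective (sub_eq_zero.1 (pow_eq_zero_iff (two_ne_zero)|>.1 h))) hij
  refine ⟨hoff, ?_, ?_⟩
  · intro i
    have h := hrow i
    rw [Finset.sum_eq_single i (fun k _ hk => by rw [hoff i k hk.symm, map_zero])
      (fun h => absurd (Finset.mem_univ i) h), Complex.normSq_eq_norm_sq] at h
    exact (pow_eq_one_iff_of_nonneg (norm_nonneg _) two_ne_zero).1 h
  · have hcomm : U * Matrix.diagonal (fun k => (d k : ℂ)) =
        Matrix.diagonal (fun k => (d k : ℂ)) * U := by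
      ext i j
      rw [Matrix.mul_diagonal, Matrix.diagonal_mul]
      by_cases hij : i = j
      · subst hij; ring
      · rw [hoff i j hij]; ring
    rw [hcomm, Matrix.mul_assoc, hUU, Matrix.mul_one]
end

section
/- Let N ≥ n ≥ 1 be integers and let d_1 > d_2 > … > d_N > 0 be real numbers; set D = diag(d_1, …, d_N) ∈ ℝ^{N×N} and D̃ = diag(d_1, …, d_n) ∈ ℝ^{n×n}. Let U ∈ ℂ^{N×n} satisfy U^H U = I_n, and suppose the matrix V = D U D̃^{-1} ∈ ℂ^{N×n} (i.e. V_{i,j} = (d_i/d_j) U_{i,j}) also satisfies V^H V = I_n. Then U_{i,j} = 0 whenever i ≠ j, and |U_{j,j}| = 1 for j = 1, …, n; that is, U consists of an n×n diagonal matrix with unimodular diagonal entries stacked on top of an (N−n)×n zero block. (Lemma 2.) -/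
open Matrix Finset

/-- Lemma 2: let `d_1 > … > d_N > 0`, let `U ∈ ℂ^{N×n}` have orthonormal columns, and
suppose `V = D U D̃⁻¹` (i.e. `V_{ij} = (d_i/d_j) U_{ij}`) also has orthonormal columns.
Then `U` consists of an `n×n` diagonal matrix with unimodular diagonal entries stacked on
top of a zero block. -/
theorem stmt8 (N n : ℕ) (hn : 1 ≤ n) (hnN : n ≤ N)
    (d : Fin N → ℝ) (hd : StrictAnti d) (hdpos : ∀ i, 0 < d i)
    (U : Matrix (Fin N) (Fin n) ℂ) (hU : Uᴴ * U = 1)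
    (V : Matrix (Fin N) (Fin n) ℂ)
    (hV : ∀ (i : Fin N) (j : Fin n),
      V i j = ((d i / d (Fin.castLE hnN j) : ℝ) : ℂ) * U i j)
    (hVunit : Vᴴ * V = 1) :
    (∀ (i : Fin N) (j : Fin n), (i : ℕ) ≠ (j : ℕ) → U i j = 0) ∧
    (∀ j : Fin n, ‖U (Fin.castLE hnN j) j‖ = 1) := by
  have hUn : ∀ j, ∑ i, ‖U i j‖ ^ 2 = 1 := by
    intro j
    have h := congrFun (congrFun hU j) j
    simp only [Matrix.mul_apply, Matrix.conjTranspose_apply, Matrix.one_apply_eq,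
      RCLike.star_def, Complex.conj_mul'] at h
    exact_mod_cast h
  have hVn : ∀ j, ∑ i, (d i / d (Fin.castLE hnN j)) ^ 2 * ‖U i j‖ ^ 2 = 1 := by
    intro j
    have h := congrFun (congrFun hVunit j) j
    simp only [Matrix.mul_apply, Matrix.conjTranspose_apply, Matrix.one_apply_eq,
      RCLike.star_def, Complex.conj_mul'] at h
    have h2 : ∑ i, ‖V i j‖ ^ 2 = 1 := by exact_mod_cast h
    rw [← h2]
    refine Finset.sum_congr rfl fun i _ => ?_
    rw [hV, norm_mul, mul_pow, Complex.norm_real, Real.norm_eq_abs, sq_abs]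
  have hnorm : ∀ j : Fin n, (∀ i : Fin N, (i : ℕ) ≠ (j : ℕ) → U i j = 0) →
      ‖U (Fin.castLE hnN j) j‖ = 1 := by
    intro j hj
    have h := hUn j
    rw [Finset.sum_eq_single (Fin.castLE hnN j)] at h
    · exact (pow_eq_one_iff_of_nonneg (norm_nonneg _) two_ne_zero).1 h
    · intro i _ hi
      rw [hj i (fun h' => hi (Fin.ext h'))]
      simp
    · simp
  have key : ∀ m : ℕ, ∀ j : Fin n, (j : ℕ) = m →
      ∀ i : Fin N, (i : ℕ) ≠ (j : ℕ) → U i j = 0 := by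
    intro m
    induction m using Nat.strong_induction_on with
    | _ m ih =>
      intro j hjm
      have hlow : ∀ i : Fin N, (i : ℕ) < j → U i j = 0 := by
        intro i hi
        let k : Fin n := ⟨i, hi.trans j.2⟩
        have hk := ih k (by rw [← hjm]; exact hi) k rfl
        have hki : Fin.castLE hnN k = i := Fin.ext rfl
        have hk1 := hnorm k hk
        rw [hki] at hk1
        have h := congrFun (congrFun hU k) j
        have hkj : k ≠ j := fun e => by
          have := congrArg Fin.val e
          simp only [k] at this
          omega
        rw [Matrix.one_apply_ne hkj, Matrix.mul_apply, Finset.sum_eq_single i] at h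
        · rw [Matrix.conjTranspose_apply] at h
          rcases mul_eq_zero.1 h with h | h
          · rw [star_eq_zero] at h
            rw [h] at hk1
            simp at hk1
          · exact h
        · intro l _ hl
          rw [Matrix.conjTranspose_apply, hk l (fun e => hl (Fin.ext e))]
          simp
        · simp
      have hpos := hdpos (Fin.castLE hnN j)
      have hs : ∑ i, (1 - (d i / d (Fin.castLE hnN j)) ^ 2) * ‖U i j‖ ^ 2 = 0 := by
        simp only [sub_mul, one_mul, Finset.sum_sub_distrib, hUn, hVn, sub_self]
      have hlt : ∀ i : Fin N, (j : ℕ) < i → 0 < 1 - (d i / d (Fin.castLE hnN j)) ^ 2 := by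
        intro i hi
        have h1 : d i < d (Fin.castLE hnN j) := hd (Fin.lt_def.2 hi)
        have h2 : d i / d (Fin.castLE hnN j) < 1 := (div_lt_one hpos).2 h1
        have h3 : 0 < d i / d (Fin.castLE hnN j) := div_pos (hdpos i) hpos
        nlinarith
      rw [Finset.sum_eq_zero_iff_of_nonneg] at hs
      · intro i hi
        rcases lt_or_gt_of_ne hi with hi | hi
        · exact hlow i hi
        · have h := hs i (Finset.mem_univ i)
          rcases mul_eq_zero.1 h with h | h
          · exact absurd h (hlt i hi).ne'
          · simpa using h
      · intro i _
        rcases lt_trichotomy (i : ℕ) j with hi | hi | hi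
        · simp [hlow i hi]
        · have : i = Fin.castLE hnN j := Fin.ext hi
          rw [this, div_self hpos.ne']
          simp
        · exact mul_nonneg (hlt i hi).le (sq_nonneg _)
  exact ⟨fun i j h => key j j rfl i h, fun j => hnorm j (key j j rfl)⟩
end
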